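/- arXiv:1701.06187 — 3 statements merged into one kernel-verified Lean document; each statement's English description precedes it below -/
import Mathlib

section
/- (Recursion for the compact form.) Let T_1, …, T_{t−1} be a list of t−1 subsets of 𝒦 with compact form T*_{t−1,1}, …, T*_{t−1,t−1}, and let T_1, …, T_t be the list obtained by appending one more subset T_t, with compact form T*_{t,1}, …, T*_{t,t}. Then T*_{t,1} = T*_{t−1,1} ∪ T_t; T*_{t,i} = T*_{t−1,i} ∪ (T*_{t−1,i−1} ∩ T_t) for every i with 1 < i < t; and T*_{t,t} = T*_{t−1,t−1} ∩ T_t. -/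
/-- The `i`-th set of the compact form of the element rearrangement of the list
`T 0, …, T (t-1)` of subsets of `Fin K`. -/
def compactForm {K t : ℕ} (T : Fin t → Finset (Fin K)) (i : ℕ) : Finset (Fin K) :=
  (Finset.powersetCard i (Finset.univ : Finset (Fin t))).sup fun S => S.inf T

theorem compactForm_zero {K t : ℕ} (T : Fin t → Finset (Fin K)) :
    compactForm T 0 = Finset.univ := by
  simp [compactForm]

theorem compactForm_eq_empty_of_lt {K t i : ℕ} (T : Fin t → Finset (Fin K)) (h : t < i) :
    compactForm T i = ∅ := by
  rw [compactForm, Finset.powersetCard_eq_empty.2 (by simpa using h), Finset.sup_empty,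
    Finset.bot_eq_empty]

/-- Pascal-type recursion: an `(i + 1)`-subset of indices either avoids the last index or
consists of the last index and `i` others. -/
theorem compactForm_succ {K n : ℕ} (T : Fin (n + 1) → Finset (Fin K)) (i : ℕ) :
    compactForm T (i + 1) = compactForm (fun j : Fin n => T j.castSucc) (i + 1)
      ∪ (compactForm (fun j : Fin n => T j.castSucc) i ∩ T (Fin.last n)) := by
  have huniv : (Finset.univ : Finset (Fin (n + 1)))
      = insert (Fin.last n) (Finset.univ.map Fin.castSuccEmb) := by
    rw [Fin.univ_castSuccEmb, Finset.cons_eq_insert]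
  have hlast : Fin.last n ∉ (Finset.univ : Finset (Fin n)).map Fin.castSuccEmb := by
    simp [Fin.castSucc_ne_last]
  simp only [compactForm]
  rw [huniv, Finset.powersetCard_succ_insert hlast, Finset.sup_union, Finset.sup_image,
    Finset.powersetCard_map, Finset.powersetCard_map, Finset.sup_map, Finset.sup_map,
    Finset.sup_eq_union, ← Finset.inf_eq_inter, Finset.sup_inf_distrib_right]
  simp only [Function.comp_def, Finset.inf_insert, Finset.mapEmbedding_apply, Finset.inf_map,
    RelEmbedding.coe_toEmbedding, Fin.coe_castSuccEmb, inf_comm]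

/-- Recursion for the compact form: appending one more subset `T (Fin.last n)` to the list
`T ∘ Fin.castSucc` of `n` subsets, the compact form of the extended list (of `t = n + 1`
sets) is obtained from the compact form of the shorter list by
`T*_{t,1} = T*_{t-1,1} ∪ T_t`, `T*_{t,i} = T*_{t-1,i} ∪ (T*_{t-1,i-1} ∩ T_t)` for
`1 < i < t`, and `T*_{t,t} = T*_{t-1,t-1} ∩ T_t`. -/
theorem compactForm_recursion {K n : ℕ} (hK : 1 ≤ K)
    (T : Fin (n + 1) → Finset (Fin K)) :
    (compactForm T 1 = compactForm (fun j : Fin n => T j.castSucc) 1 ∪ T (Fin.last n)) ∧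
    (∀ i : ℕ, 1 < i → i < n + 1 →
      compactForm T i
        = compactForm (fun j : Fin n => T j.castSucc) i
            ∪ (compactForm (fun j : Fin n => T j.castSucc) (i - 1) ∩ T (Fin.last n))) ∧
    (compactForm T (n + 1)
        = compactForm (fun j : Fin n => T j.castSucc) n ∩ T (Fin.last n)) := by
  refine ⟨?_, fun i hi _ => ?_, ?_⟩
  · rw [compactForm_succ T 0, compactForm_zero, Finset.univ_inter]
  · obtain ⟨j, rfl⟩ := Nat.exists_eq_add_of_lt (Nat.zero_lt_of_lt hi)
    simpa using compactForm_succ T j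
  · rw [compactForm_succ, compactForm_eq_empty_of_lt _ n.lt_succ_self, Finset.empty_union]
end

section
/- For all subsets T₁, T₂ ⊆ 𝒦, the set function b⁺(T) = I(V_T; Y | V_{T^c}, Q) satisfies the supermodular-type inequality b⁺(T₁) + b⁺(T₂) ≥ b⁺(T₁ ∩ T₂) + b⁺(T₁ ∪ T₂), i.e., I(V_{T₁}; Y | V_{T₁^c}, Q) + I(V_{T₂}; Y | V_{T₂^c}, Q) ≥ I(V_{T₁∩T₂}; Y | V_{(T₁∩T₂)^c}, Q) + I(V_{T₁∪T₂}; Y | V_{(T₁∪T₂)^c}, Q). -/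
open scoped Classical

/-- Probability that the random variable `X` (on the finite sample space `Ω` with
probability mass function `p`) takes the value `a`. -/
noncomputable def prob {Ω : Type} [Fintype Ω] (p : Ω → ℝ) {α : Type} (X : Ω → α)
    (a : α) : ℝ :=
  ∑ ω : Ω, if X ω = a then p ω else 0

/-- Shannon entropy (base 2) of the random variable `X`, with the convention
`0 · log 0 = 0`. -/
noncomputable def ent {Ω : Type} [Fintype Ω] (p : Ω → ℝ) {α : Type} [Fintype α]
    (X : Ω → α) : ℝ :=
  -∑ a : α, prob p X a * Real.logb 2 (prob p X a)

/-- Conditional mutual information `I(X; Y | Z) = H(X,Z) + H(Y,Z) - H(X,Y,Z) - H(Z)`. -/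
noncomputable def condMI {Ω : Type} [Fintype Ω] (p : Ω → ℝ) {α β γ : Type}
    [Fintype α] [Fintype β] [Fintype γ] (X : Ω → α) (Y : Ω → β) (Z : Ω → γ) : ℝ :=
  ent p (fun ω => (X ω, Z ω)) + ent p (fun ω => (Y ω, Z ω))
    - ent p (fun ω => (X ω, Y ω, Z ω)) - ent p Z

/-- The tuple-valued random variable `V_J = (V_j)_{j ∈ J}`. -/
def VJ {Ω : Type} {K : ℕ} {α : Fin K → Type} (V : (i : Fin K) → Ω → α i)
    (J : Finset (Fin K)) : Ω → ((j : J) → α j) :=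
  fun ω j => V j ω

/-- `V_1, …, V_K` are mutually conditionally independent given `Q`:
`P(V_1 = v_1, …, V_K = v_K, Q = q) · P(Q = q)^(K-1) = ∏ i, P(V_i = v_i, Q = q)`. -/
def CondIndep {Ω : Type} [Fintype Ω] {𝒬 : Type} {K : ℕ} {α : Fin K → Type}
    (p : Ω → ℝ) (Q : Ω → 𝒬) (V : (i : Fin K) → Ω → α i) : Prop :=
  ∀ (q : 𝒬) (v : (i : Fin K) → α i),
    prob p (fun ω => ((fun i => V i ω : (i : Fin K) → α i), Q ω)) (v, q)
        * (prob p Q q) ^ (K - 1)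
      = ∏ i : Fin K, prob p (fun ω => (V i ω, Q ω)) (v i, q)

section Entropy

variable {Ω : Type} [Fintype Ω] {p : Ω → ℝ}

theorem prob_nonneg (hp : ∀ ω, 0 ≤ p ω) {α : Type} (X : Ω → α) (a : α) : 0 ≤ prob p X a :=
  Finset.sum_nonneg fun ω _ => by split_ifs <;> simp [hp ω]

theorem prob_apply_pos (hp : ∀ ω, 0 ≤ p ω) {α : Type} (X : Ω → α) {ω : Ω} (hω : 0 < p ω) :
    0 < prob p X (X ω) := by
  refine Finset.sum_pos' (fun ω' _ => ?_) ⟨ω, Finset.mem_univ ω, by simpa using hω⟩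
  split_ifs <;> simp [hp ω']

/-- Change of variables: the expectation of `f ∘ X` computed from the law of `X`. -/
theorem sum_mul_comp {α : Type} [Fintype α] (X : Ω → α) (f : α → ℝ) :
    ∑ ω, p ω * f (X ω) = ∑ a, prob p X a * f a := by
  simp only [prob, Finset.sum_mul, ite_mul, zero_mul]
  rw [Finset.sum_comm]
  simp

theorem sum_prob_prod_left {α β : Type} [Fintype α] (X : Ω → α) (Y : Ω → β) (b : β) :
    ∑ a, prob p (fun ω => (X ω, Y ω)) (a, b) = prob p Y b := by
  simp only [prob]
  rw [Finset.sum_comm]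
  simp [Prod.ext_iff, ite_and]

/-- Entropy as the expectation of the information content. -/
theorem ent_eq_neg_sum {α : Type} [Fintype α] (X : Ω → α) :
    ent p X = -∑ ω, p ω * Real.logb 2 (prob p X (X ω)) := by
  rw [ent, sum_mul_comp X fun a => Real.logb 2 (prob p X a)]

/-- Entropy only depends on the partition of the sample space induced by the variable. -/
theorem ent_congr {α β : Type} [Fintype α] [Fintype β] {X : Ω → α} {Y : Ω → β}
    (h : ∀ ω ω', X ω = X ω' ↔ Y ω = Y ω') : ent p X = ent p Y := by
  simp only [ent_eq_neg_sum, prob, h]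

/-- Submodularity of entropy: `H(A,B,C) + H(C) ≤ H(A,C) + H(B,C)`. -/
theorem ent_submodular (hp : ∀ ω, 0 ≤ p ω) {α β γ : Type} [Fintype α] [Fintype β] [Fintype γ]
    (A : Ω → α) (B : Ω → β) (C : Ω → γ) :
    ent p (fun ω => (A ω, B ω, C ω)) + ent p C
      ≤ ent p (fun ω => (A ω, C ω)) + ent p (fun ω => (B ω, C ω)) := by
  set P := prob p (fun ω => (A ω, B ω, C ω))
  set PA := prob p (fun ω => (A ω, C ω))
  set PB := prob p (fun ω => (B ω, C ω))
  set PC := prob p C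
  let g : α × β × γ → ℝ := fun x =>
    PA (x.1, x.2.2) * PB (x.2.1, x.2.2) / (P x * PC x.2.2)
  have hg : ∑ ω, p ω * g (A ω, B ω, C ω) ≤ ∑ ω, p ω := by
    calc ∑ ω, p ω * g (A ω, B ω, C ω)
        = ∑ x, P x * g x := sum_mul_comp (fun ω => (A ω, B ω, C ω)) g
      _ ≤ ∑ x : α × β × γ, PA (x.1, x.2.2) * PB (x.2.1, x.2.2) / PC x.2.2 := by
          refine Finset.sum_le_sum fun x _ => ?_
          have hnn : 0 ≤ PA (x.1, x.2.2) * PB (x.2.1, x.2.2) / PC x.2.2 :=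
            div_nonneg (mul_nonneg (prob_nonneg hp _ _) (prob_nonneg hp _ _))
              (prob_nonneg hp _ _)
          rcases eq_or_ne (P x) 0 with h | h
          · simpa [h] using hnn
          · refine le_of_eq ?_
            rw [mul_div_assoc', mul_div_mul_left _ _ h]
      _ = ∑ c, (∑ a, PA (a, c)) * (∑ b, PB (b, c)) / PC c := by
          simp only [Fintype.sum_prod_type, Finset.sum_mul_sum, Finset.sum_div]
          rw [Finset.sum_comm (s := (Finset.univ : Finset γ))]
          exact Finset.sum_congr rfl fun a _ => Finset.sum_comm
      _ = ∑ c, PC c * 1 := by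
          refine Finset.sum_congr rfl fun c _ => ?_
          rw [sum_prob_prod_left, sum_prob_prod_left, mul_self_div_self, mul_one]
      _ = ∑ ω, p ω := by
          rw [← sum_mul_comp C fun _ => 1]
          simp
  have hlog : ∀ ω, p ω * (Real.log (PA (A ω, C ω)) + Real.log (PB (B ω, C ω))
      - Real.log (P (A ω, B ω, C ω)) - Real.log (PC (C ω)))
      ≤ p ω * g (A ω, B ω, C ω) - p ω := by
    intro ω
    rcases (hp ω).eq_or_lt with h | h
    · simp [← h]
    · have h1 : 0 < PA (A ω, C ω) := prob_apply_pos hp (fun ω => (A ω, C ω)) h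
      have h2 : 0 < PB (B ω, C ω) := prob_apply_pos hp (fun ω => (B ω, C ω)) h
      have h3 : 0 < P (A ω, B ω, C ω) := prob_apply_pos hp (fun ω => (A ω, B ω, C ω)) h
      have h4 : 0 < PC (C ω) := prob_apply_pos hp C h
      have h5 := Real.log_le_sub_one_of_pos (div_pos (mul_pos h1 h2) (mul_pos h3 h4))
      rw [Real.log_div (mul_pos h1 h2).ne' (mul_pos h3 h4).ne', Real.log_mul h1.ne' h2.ne',
        Real.log_mul h3.ne' h4.ne'] at h5
      have h6 := mul_le_mul_of_nonneg_left h5 h.le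
      simp only [g]
      linarith
  have hsum := Finset.sum_le_sum fun ω (_ : ω ∈ Finset.univ) => hlog ω
  simp only [mul_sub, mul_add, Finset.sum_sub_distrib, Finset.sum_add_distrib] at hsum
  simp only [ent_eq_neg_sum, Real.logb, mul_div_assoc', ← Finset.sum_div]
  have h2 : 0 < Real.log 2 := Real.log_pos one_lt_two
  rw [← sub_nonneg]
  refine (div_nonneg (a := ∑ ω, p ω * Real.log (P (A ω, B ω, C ω))
      + ∑ ω, p ω * Real.log (PC (C ω)) - ∑ ω, p ω * Real.log (PA (A ω, C ω))
      - ∑ ω, p ω * Real.log (PB (B ω, C ω))) (by linarith) h2.le).trans_eq ?_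
  ring

end Entropy

section Tuples

variable {Ω : Type} {K : ℕ} {α : Fin K → Type} {V : (i : Fin K) → Ω → α i}

theorem VJ_eq_iff (J : Finset (Fin K)) (ω ω' : Ω) :
    VJ V J ω = VJ V J ω' ↔ ∀ i ∈ J, V i ω = V i ω' := by
  simp [VJ, funext_iff]

variable [Fintype Ω] {𝒬 : Type} [∀ i, Fintype (α i)] {p : Ω → ℝ} {Q : Ω → 𝒬}

/-- Marginalizing conditional independence to the coordinates in `J`. -/
theorem CondIndep.prob_VJ_mul_pow (hind : CondIndep p Q V) (J : Finset (Fin K)) (ω : Ω) :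
    prob p (fun ω => (VJ V J ω, Q ω)) (VJ V J ω, Q ω) * prob p Q (Q ω) ^ (K - 1)
      = ∏ i, if i ∈ J then prob p (fun ω => (V i ω, Q ω)) (V i ω, Q ω) else prob p Q (Q ω) := by
  let t : (i : Fin K) → Finset (α i) := fun i => if i ∈ J then {V i ω} else Finset.univ
  have hfac : ∀ i, (if i ∈ J then prob p (fun ω => (V i ω, Q ω)) (V i ω, Q ω)
      else prob p Q (Q ω)) = ∑ a ∈ t i, prob p (fun ω => (V i ω, Q ω)) (a, Q ω) := by
    intro i
    by_cases h : i ∈ J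
    · simp [t, h]
    · simp [t, h, sum_prob_prod_left]
  have hmarg : prob p (fun ω => (VJ V J ω, Q ω)) (VJ V J ω, Q ω)
      = ∑ v ∈ Fintype.piFinset t, prob p (fun ω => ((fun i => V i ω), Q ω)) (v, Q ω) := by
    simp only [prob]
    rw [Finset.sum_comm]
    refine Finset.sum_congr rfl fun ω' _ => ?_
    have hmem : (fun i => V i ω') ∈ Fintype.piFinset t ↔ VJ V J ω' = VJ V J ω := by
      rw [Fintype.mem_piFinset, VJ_eq_iff]
      refine forall_congr' fun i => ?_
      by_cases h : i ∈ J <;> simp [t, h]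
    simp only [Prod.mk.injEq, ite_and, Finset.sum_ite_eq, hmem]
  rw [Finset.prod_congr rfl fun i _ => hfac i, Finset.prod_univ_sum, hmarg, Finset.sum_mul]
  exact Finset.sum_congr rfl fun v _ => hind (Q ω) v

theorem CondIndep.log_prob_VJ (hp : ∀ ω, 0 ≤ p ω) (hind : CondIndep p Q V)
    (J : Finset (Fin K)) {ω : Ω} (hω : 0 < p ω) :
    Real.logb 2 (prob p (fun ω => (VJ V J ω, Q ω)) (VJ V J ω, Q ω))
      = (K - (K - 1 : ℕ)) * Real.logb 2 (prob p Q (Q ω))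
        + ∑ i ∈ J, (Real.logb 2 (prob p (fun ω => (V i ω, Q ω)) (V i ω, Q ω))
          - Real.logb 2 (prob p Q (Q ω))) := by
  have hQ := prob_apply_pos hp Q hω
  have hV := fun i => prob_apply_pos hp (fun ω => (V i ω, Q ω)) hω
  have hJ := prob_apply_pos hp (fun ω => (VJ V J ω, Q ω)) hω
  have h := congrArg (Real.logb 2) (hind.prob_VJ_mul_pow J ω)
  rw [Real.logb_mul hJ.ne' (pow_pos hQ _).ne', Real.logb_pow,
    Real.logb_prod _ _ fun i _ => by
      split_ifs
      · exact (hV i).ne'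
      · exact hQ.ne'] at h
  have hsplit : ∀ i, Real.logb 2 (if i ∈ J then prob p (fun ω => (V i ω, Q ω)) (V i ω, Q ω)
      else prob p Q (Q ω)) = Real.logb 2 (prob p Q (Q ω)) + if i ∈ J then
        (Real.logb 2 (prob p (fun ω => (V i ω, Q ω)) (V i ω, Q ω))
          - Real.logb 2 (prob p Q (Q ω))) else 0 := by
    intro i
    split_ifs <;> ring
  simp only [hsplit, Finset.sum_add_distrib, Finset.sum_ite_mem, Finset.univ_inter,
    Finset.sum_const, Finset.card_univ, Fintype.card_fin, nsmul_eq_mul] at h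
  linarith

/-- Under conditional independence given `Q`, the set function `J ↦ H(V_J, Q)` is modular. -/
theorem CondIndep.ent_VJ_modular [Fintype 𝒬] (hp : ∀ ω, 0 ≤ p ω) (hind : CondIndep p Q V)
    (A B : Finset (Fin K)) :
    ent p (fun ω => (VJ V (A ∪ B) ω, Q ω)) + ent p (fun ω => (VJ V (A ∩ B) ω, Q ω))
      = ent p (fun ω => (VJ V A ω, Q ω)) + ent p (fun ω => (VJ V B ω, Q ω)) := by
  simp only [ent_eq_neg_sum, ← neg_add, ← Finset.sum_add_distrib, ← mul_add]
  refine congrArg _ (Finset.sum_congr rfl fun ω _ => ?_)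
  rcases (hp ω).eq_or_lt with h | h
  · simp [← h]
  · simp only [hind.log_prob_VJ hp _ h]
    have := Finset.sum_union_inter (s₁ := A) (s₂ := B)
      (f := fun i => Real.logb 2 (prob p (fun ω => (V i ω, Q ω)) (V i ω, Q ω))
        - Real.logb 2 (prob p Q (Q ω)))
    congr 1
    linarith

theorem ent_VJ_submodular [Fintype 𝒬] {𝒴 : Type} [Fintype 𝒴] (hp : ∀ ω, 0 ≤ p ω) (Y : Ω → 𝒴)
    (A B : Finset (Fin K)) :
    ent p (fun ω => (Y ω, VJ V (A ∪ B) ω, Q ω)) + ent p (fun ω => (Y ω, VJ V (A ∩ B) ω, Q ω))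
      ≤ ent p (fun ω => (Y ω, VJ V A ω, Q ω)) + ent p (fun ω => (Y ω, VJ V B ω, Q ω)) := by
  convert ent_submodular hp (VJ V A) (VJ V B) (fun ω => (Y ω, VJ V (A ∩ B) ω, Q ω)) using 2
  all_goals
    refine ent_congr fun ω ω' => ?_
    simp only [Prod.mk.injEq, VJ_eq_iff, Finset.mem_union, Finset.mem_inter]
    grind

/-- `I(V_T; Y | V_{Tᶜ}, Q)` in terms of entropies of full tuples and of `V_{Tᶜ}`. -/
theorem condMI_VJ_compl [Fintype 𝒬] {𝒴 : Type} [Fintype 𝒴] (Y : Ω → 𝒴) (T : Finset (Fin K)) :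
    condMI p (VJ V T) Y (fun ω => (VJ V Tᶜ ω, Q ω))
      = ent p (fun ω => (VJ V Finset.univ ω, Q ω))
        + ent p (fun ω => (Y ω, VJ V Tᶜ ω, Q ω))
        - ent p (fun ω => (Y ω, VJ V Finset.univ ω, Q ω))
        - ent p (fun ω => (VJ V Tᶜ ω, Q ω)) := by
  unfold condMI
  congr 1
  congr 1
  · congr 1
    refine ent_congr fun ω ω' => ?_
    simp only [Prod.mk.injEq, VJ_eq_iff, Finset.mem_compl, Finset.mem_univ]
    grind
  · refine ent_congr fun ω ω' => ?_
    simp only [Prod.mk.injEq, VJ_eq_iff, Finset.mem_compl, Finset.mem_univ]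
    grind

end Tuples

/-- The set function `b⁺(T) = I(V_T; Y | V_{T^c}, Q)` is supermodular:
`b⁺(T₁) + b⁺(T₂) ≥ b⁺(T₁ ∩ T₂) + b⁺(T₁ ∪ T₂)`. -/
theorem bplus_supermodular {Ω 𝒬 𝒴 𝒵 : Type} [Fintype Ω] [Fintype 𝒬] [Fintype 𝒴]
    [Fintype 𝒵] {K : ℕ} {α : Fin K → Type} [∀ i, Fintype (α i)]
    (p : Ω → ℝ) (hp : ∀ ω, 0 ≤ p ω) (hp1 : ∑ ω : Ω, p ω = 1)
    (Q : Ω → 𝒬) (Y : Ω → 𝒴) (Z : Ω → 𝒵) (V : (i : Fin K) → Ω → α i)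
    (hind : CondIndep p Q V) (T₁ T₂ : Finset (Fin K)) :
    condMI p (VJ V (T₁ ∩ T₂)) Y (fun ω => (VJ V (T₁ ∩ T₂)ᶜ ω, Q ω))
        + condMI p (VJ V (T₁ ∪ T₂)) Y (fun ω => (VJ V (T₁ ∪ T₂)ᶜ ω, Q ω))
      ≤ condMI p (VJ V T₁) Y (fun ω => (VJ V T₁ᶜ ω, Q ω))
        + condMI p (VJ V T₂) Y (fun ω => (VJ V T₂ᶜ ω, Q ω)) := by
  have hsub := ent_VJ_submodular (V := V) (Q := Q) hp Y T₁ᶜ T₂ᶜ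
  have hmod := hind.ent_VJ_modular hp T₁ᶜ T₂ᶜ
  rw [← Finset.compl_inter, ← Finset.compl_union] at hsub hmod
  simp only [condMI_VJ_compl]
  linarith
end

section
/- (Exactness of the Fourier–Motzkin elimination.) Fix K ≥ 1 and 𝒦 = {1, …, K}. Let f and g be real-valued functions on the subsets of 𝒦 with f(∅) = g(∅) = 0 and g(J) ≥ 0 for all J, and suppose that for every finite list T_1, …, T_t of subsets of 𝒦 with compact form T*_{t,1}, …, T*_{t,t} one has ∑_{i=1}^t f(T_i) ≥ ∑_{i=1}^t f(T*_{t,i}) and ∑_{i=1}^t g(T_i) ≤ ∑_{i=1}^t g(T*_{t,i}). Then for every x ∈ ℝ^K the following are equivalent: (i) there exists y ∈ ℝ^K such that ∑_{j∈J} (x_j + y_j) ≤ f(J) and ∑_{j∈J} y_j ≥ g(J) for every nonempty J ⊆ 𝒦; (ii) ∑_{j∈J} x_j ≤ f(J) − g(J) for every nonempty J ⊆ 𝒦. -/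
theorem compactForm_pair_one {K : ℕ} (A B : Finset (Fin K)) :
    compactForm ![A, B] 1 = A ∪ B := by
  ext a
  simp [compactForm, Finset.powersetCard_one, Finset.mem_sup, Fin.exists_fin_two]

theorem compactForm_pair_two {K : ℕ} (A B : Finset (Fin K)) :
    compactForm ![A, B] 2 = A ∩ B := by
  have h : Finset.powersetCard 2 (Finset.univ : Finset (Fin 2)) = {Finset.univ} := by decide
  ext a
  simp [compactForm, h, Finset.mem_inf, Fin.forall_fin_two]

/-- The modular sandwich theorem: between a supermodular set function and a submodular set
function above it there is a modular one. -/
theorem exists_modular_between {α : Type*} [DecidableEq α] (S : Finset α) (p b : Finset α → ℝ)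
    (hp0 : p ∅ = 0) (hb0 : b ∅ = 0)
    (hp : ∀ A ⊆ S, ∀ B ⊆ S, p A + p B ≤ p (A ∪ B) + p (A ∩ B))
    (hb : ∀ A ⊆ S, ∀ B ⊆ S, b (A ∪ B) + b (A ∩ B) ≤ b A + b B)
    (hpb : ∀ A ⊆ S, p A ≤ b A) :
    ∃ m : α → ℝ, ∀ J ⊆ S, p J ≤ ∑ j ∈ J, m j ∧ ∑ j ∈ J, m j ≤ b J := by
  induction S using Finset.induction_on generalizing p b with
  | empty =>
    refine ⟨0, fun J hJ => ?_⟩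
    rw [Finset.subset_empty] at hJ
    simp [hJ, hp0, hb0]
  | insert e S he ih =>
    have hsub : ∀ {A}, A ⊆ S → A ⊆ insert e S := fun h => h.trans (Finset.subset_insert e S)
    have hins : ∀ {A}, A ⊆ S → insert e A ⊆ insert e S := fun h => Finset.insert_subset_insert e h
    have hmem : ∀ {A}, A ⊆ S → e ∉ A := fun h h' => he (h h')
    have hinter : ∀ {A B : Finset α}, A ⊆ S → A ∩ insert e B = A ∩ B :=
      fun h => Finset.inter_insert_of_notMem (hmem h)
    have hinter_left : ∀ {A B : Finset α}, B ⊆ S → insert e A ∩ B = A ∩ B :=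
      fun h => Finset.insert_inter_of_notMem (hmem h)
    have hcross : ∀ J ⊆ S, ∀ L ⊆ S, p (insert e J) - b J ≤ b (insert e L) - p L := by
      intro J hJ L hL
      have h₁ := hp _ (hins hJ) _ (hsub hL)
      have h₂ := hb _ (hsub hJ) _ (hins hL)
      rw [Finset.insert_union, hinter_left hL] at h₁
      rw [Finset.union_insert, hinter hJ] at h₂
      have h₃ := hpb _ (hins (Finset.union_subset hJ hL))
      have h₄ := hpb _ (hsub (Finset.inter_subset_left.trans hJ : J ∩ L ⊆ S))
      linarith
    obtain ⟨c, hcp, hcb⟩ : ∃ c, (∀ J ⊆ S, p (insert e J) - b J ≤ c) ∧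
        ∀ L ⊆ S, c ≤ b (insert e L) - p L := by
      refine ⟨S.powerset.sup' ⟨∅, Finset.empty_mem_powerset S⟩ fun J => p (insert e J) - b J,
        fun J hJ => Finset.le_sup' (fun J => p (insert e J) - b J) (Finset.mem_powerset.2 hJ),
        fun L hL => Finset.sup'_le _ _ fun J hJ => hcross J (Finset.mem_powerset.1 hJ) L hL⟩
    have hcp0 := hcp ∅ (Finset.empty_subset S)
    have hcb0 := hcb ∅ (Finset.empty_subset S)
    obtain ⟨m, hm⟩ := ih (fun J => max (p J) (p (insert e J) - c))
      (fun J => min (b J) (b (insert e J) - c))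
      (by rw [hp0]; exact max_eq_left (by linarith))
      (by rw [hb0]; exact min_eq_left (by linarith))
      (by
        intro A hA B hB
        have h₁ := hp _ (hsub hA) _ (hsub hB)
        have h₂ := hp _ (hins hA) _ (hsub hB)
        have h₃ := hp _ (hsub hA) _ (hins hB)
        have h₄ := hp _ (hins hA) _ (hins hB)
        rw [Finset.insert_union, hinter_left hB] at h₂
        rw [Finset.union_insert, hinter hA] at h₃
        rw [← Finset.insert_union_distrib, ← Finset.insert_inter_distrib] at h₄
        have hU₁ := le_max_left (p (A ∪ B)) (p (insert e (A ∪ B)) - c)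
        have hU₂ := le_max_right (p (A ∪ B)) (p (insert e (A ∪ B)) - c)
        have hI₁ := le_max_left (p (A ∩ B)) (p (insert e (A ∩ B)) - c)
        have hI₂ := le_max_right (p (A ∩ B)) (p (insert e (A ∩ B)) - c)
        rcases max_choice (p A) (p (insert e A) - c) with h | h <;>
          rcases max_choice (p B) (p (insert e B) - c) with h' | h' <;>
          simp only [h, h'] <;> linarith)
      (by
        intro A hA B hB
        have h₁ := hb _ (hsub hA) _ (hsub hB)
        have h₂ := hb _ (hins hA) _ (hsub hB)
        have h₃ := hb _ (hsub hA) _ (hins hB)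
        have h₄ := hb _ (hins hA) _ (hins hB)
        rw [Finset.insert_union, hinter_left hB] at h₂
        rw [Finset.union_insert, hinter hA] at h₃
        rw [← Finset.insert_union_distrib, ← Finset.insert_inter_distrib] at h₄
        have hU₁ := min_le_left (b (A ∪ B)) (b (insert e (A ∪ B)) - c)
        have hU₂ := min_le_right (b (A ∪ B)) (b (insert e (A ∪ B)) - c)
        have hI₁ := min_le_left (b (A ∩ B)) (b (insert e (A ∩ B)) - c)
        have hI₂ := min_le_right (b (A ∩ B)) (b (insert e (A ∩ B)) - c)
        rcases min_choice (b A) (b (insert e A) - c) with h | h <;>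
          rcases min_choice (b B) (b (insert e B) - c) with h' | h' <;>
          simp only [h, h'] <;> linarith)
      (by
        intro A hA
        have h₁ := hpb _ (hsub hA)
        have h₂ := hpb _ (hins hA)
        have h₃ := hcp A hA
        have h₄ := hcb A hA
        exact max_le (le_min (by linarith) (by linarith)) (le_min (by linarith) (by linarith)))
    have hsum : ∀ J ⊆ S, ∑ j ∈ J, Function.update m e c j = ∑ j ∈ J, m j := fun J hJ =>
      Finset.sum_update_of_notMem (hmem hJ) m c
    refine ⟨Function.update m e c, fun J hJ => ?_⟩
    by_cases heJ : e ∈ J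
    · have hJS : J.erase e ⊆ S := Finset.subset_insert_iff.1 hJ
      obtain ⟨h₁, h₂⟩ := hm _ hJS
      have h₃ := (le_max_right _ _).trans h₁
      have h₄ := h₂.trans (min_le_right _ _)
      rw [Finset.insert_erase heJ] at h₃ h₄
      rw [← Finset.add_sum_erase J _ heJ, hsum _ hJS, Function.update_self]
      constructor <;> linarith
    · have hJS : J ⊆ S := (Finset.subset_insert_iff_of_notMem heJ).1 hJ
      rw [hsum J hJS]
      exact ⟨(le_max_left _ _).trans (hm J hJS).1, (hm J hJS).2.trans (min_le_left _ _)⟩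

/-- Exactness of the Fourier–Motzkin elimination: if `f(∅) = g(∅) = 0`, `g ≥ 0`, and
for every list `T_1, …, T_t` of subsets of `𝒦` with compact form `T*_{t,1}, …, T*_{t,t}`
one has `∑ᵢ f(T_i) ≥ ∑ᵢ f(T*_{t,i})` and `∑ᵢ g(T_i) ≤ ∑ᵢ g(T*_{t,i})`, then for every
`x ∈ ℝ^K` there exists `y ∈ ℝ^K` with `∑_{j∈J} (x_j + y_j) ≤ f(J)` and
`∑_{j∈J} y_j ≥ g(J)` for all nonempty `J ⊆ 𝒦` if and only if
`∑_{j∈J} x_j ≤ f(J) − g(J)` for all nonempty `J ⊆ 𝒦`. -/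
theorem fourier_motzkin_exact {K : ℕ} (hK : 1 ≤ K) (f g : Finset (Fin K) → ℝ)
    (hf0 : f ∅ = 0) (hg0 : g ∅ = 0) (hg : ∀ J : Finset (Fin K), 0 ≤ g J)
    (hfc : ∀ (t : ℕ) (T : Fin t → Finset (Fin K)),
      ∑ i ∈ Finset.Icc 1 t, f (compactForm T i) ≤ ∑ i : Fin t, f (T i))
    (hgc : ∀ (t : ℕ) (T : Fin t → Finset (Fin K)),
      ∑ i : Fin t, g (T i) ≤ ∑ i ∈ Finset.Icc 1 t, g (compactForm T i))
    (x : Fin K → ℝ) :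
    (∃ y : Fin K → ℝ, ∀ J : Finset (Fin K), J ≠ ∅ →
        (∑ j ∈ J, (x j + y j) ≤ f J ∧ g J ≤ ∑ j ∈ J, y j))
      ↔ (∀ J : Finset (Fin K), J ≠ ∅ → ∑ j ∈ J, x j ≤ f J - g J) := by
  constructor
  · rintro ⟨y, hy⟩ J hJ
    obtain ⟨h₁, h₂⟩ := hy J hJ
    rw [Finset.sum_add_distrib] at h₁
    linarith
  · intro h
    have hIcc : Finset.Icc 1 2 = ({1, 2} : Finset ℕ) := by decide
    have hsub : ∀ A B, f (A ∪ B) + f (A ∩ B) ≤ f A + f B := fun A B => by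
      simpa [hIcc, compactForm_pair_one, compactForm_pair_two] using hfc 2 ![A, B]
    have hsup : ∀ A B, g A + g B ≤ g (A ∪ B) + g (A ∩ B) := fun A B => by
      simpa [hIcc, compactForm_pair_one, compactForm_pair_two] using hgc 2 ![A, B]
    obtain ⟨y, hy⟩ := exists_modular_between Finset.univ g (fun J => f J - ∑ j ∈ J, x j) hg0
      (by simp [hf0]) (fun A _ B _ => hsup A B)
      (fun A _ B _ => by
        have h₁ := hsub A B
        have h₂ := Finset.sum_union_inter (s₁ := A) (s₂ := B) (f := x)
        linarith)
      (fun A _ => by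
        rcases eq_or_ne A ∅ with rfl | hA
        · simp [hf0, hg0]
        · linarith [h A hA])
    refine ⟨y, fun J _ => ?_⟩
    obtain ⟨h₁, h₂⟩ := hy J (Finset.subset_univ J)
    rw [Finset.sum_add_distrib]
    exact ⟨by linarith, h₁⟩
end
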